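/- arXiv:2601.00507 — 6 statements merged into one kernel-verified Lean document; each statement's English description precedes it below -/
import Mathlib

section
/- Let (Ω, H, P, K) be an N-way counterfactual causal space, let U ⊆ T, and let Q be a probability measure on (Ω, H_U). Then the intervention causal mechanism satisfies the first axiom: for all ω ∈ Ω and all A ∈ H, K^{do(U,Q)}_∅(ω, A) = P^{do(U,Q)}(A). -/
/-!
With `S = ∅` the patched point agrees with `ω'` on all of `U`, and `ω ↦ K U ω A` is
`cyl Ωt U`-measurable, hence depends only on the coordinates in `U` (`eq_of_measurable_cyl`).
So the two integrands coincide pointwise.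
-/

open MeasureTheory ENNReal

/-- The sub-σ-algebra of the product σ-algebra generated by the coordinate
projections `ω ↦ ω t` for `t ∈ S`. -/
def cyl {ι : Type*} (Ωt : ι → Type*) [∀ t, MeasurableSpace (Ωt t)] (S : Set ι) :
    MeasurableSpace (∀ t, Ωt t) :=
  ⨆ t ∈ S, MeasurableSpace.comap (fun ω => ω t) inferInstance

open Classical in
/-- `patch Ωt U S ω ω'` agrees with `ω'` on the coordinates in `U \ S` and with
`ω` on all other coordinates. -/
noncomputable def patch {ι : Type*} (Ωt : ι → Type*) (U S : Set ι)
    (ω ω' : ∀ t, Ωt t) : ∀ t, Ωt t :=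
  fun t => if t ∈ U \ S then ω' t else ω t

/-- A function measurable with respect to `cyl Ωt U` depends only on the coordinates in `U`:
every `cyl Ωt U`-measurable set is a preimage under restriction to `U`, in particular the
fibres of `f` are. -/
theorem eq_of_measurable_cyl {ι : Type*} {Ωt : ι → Type*} [∀ t, MeasurableSpace (Ωt t)]
    {U : Set ι} {f : (∀ t, Ωt t) → ℝ≥0∞} (hf : Measurable[cyl Ωt U] f)
    {ω ω' : ∀ t, Ωt t} (h : ∀ t ∈ U, ω t = ω' t) : f ω = f ω' := by
  have hle : cyl Ωt U ≤ MeasurableSpace.comap U.domRestrict ⊤ := by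
    refine iSup₂_le fun t ht => ?_
    rintro _ ⟨B, -, rfl⟩
    exact ⟨{x | x ⟨t, ht⟩ ∈ B}, trivial, rfl⟩
  obtain ⟨B, -, hB⟩ := hle _ (hf (measurableSet_singleton (f ω')))
  have hres : U.domRestrict ω = U.domRestrict ω' := funext fun t => h t t.2
  have hω' : ω' ∈ U.domRestrict ⁻¹' B := hB ▸ rfl
  have hω : ω ∈ U.domRestrict ⁻¹' B := by
    rw [Set.mem_preimage, hres]; exact hω'
  rw [hB] at hω
  exact hω

/-- In an `N`-way counterfactual causal space, the intervention
causal mechanism satisfies the first axiom: `K^{do(U,Q)}_∅(ω, A) = P^{do(U,Q)}(A)`. -/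
theorem interventionKernel_empty_eq_interventionMeasure
    {ι : Type*} {N : ℕ} (Ωt : ι → Type*) [∀ t, MeasurableSpace (Ωt t)]
    -- the worlds: `T^j = world ⁻¹' {j}` partition the index set
    (world : ι → Fin N)
    -- the observational probability measure
    (P : Measure (∀ t, Ωt t)) (hP : IsProbabilityMeasure P)
    -- the causal mechanism: a family of probability kernels from `(Ω, H_S)` to `(Ω, H)`
    (K : Set ι → (∀ t, Ωt t) → Measure (∀ t, Ωt t))
    (hKprob : ∀ (S : Set ι) (ω : ∀ t, Ωt t), IsProbabilityMeasure (K S ω))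
    (hKmeas : ∀ (S : Set ι) (A : Set (∀ t, Ωt t)), MeasurableSet A →
      Measurable[cyl Ωt S] fun ω => K S ω A)
    -- axiom (i)
    (hK1 : ∀ (ω : ∀ t, Ωt t) (A : Set (∀ t, Ωt t)), MeasurableSet A → K ∅ ω A = P A)
    -- axiom (ii): no cross-world causal effect
    (hK2 : ∀ (j : Fin N) (S : Set ι) (ω : ∀ t, Ωt t) (A : Set (∀ t, Ωt t)),
      MeasurableSet[cyl Ωt (world ⁻¹' {j})] A → K S ω A = K (S ∩ world ⁻¹' {j}) ω A)
    -- axiom (iii): interventional determinism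
    (hK3 : ∀ (S : Set ι) (ω : ∀ t, Ωt t) (A B : Set (∀ t, Ωt t)),
      MeasurableSet[cyl Ωt S] A → MeasurableSet B →
      K S ω (A ∩ B) = A.indicator (fun _ => (1 : ℝ≥0∞)) ω * K S ω B)
    -- the intervention: a probability measure `Q` on `(Ω, H_U)`
    (U : Set ι) (Q : @Measure (∀ t, Ωt t) (cyl Ωt U)) (hQ : IsProbabilityMeasure Q) :
    -- conclusion: `K^{do(U,Q)}_∅(ω, A) = P^{do(U,Q)}(A)`
    ∀ (ω : ∀ t, Ωt t) (A : Set (∀ t, Ωt t)), MeasurableSet A →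
      ∫⁻ ω', K (∅ ∪ U) (patch Ωt U ∅ ω ω') A ∂Q = ∫⁻ ω', K U ω' A ∂Q := by
  intro ω A hA
  refine lintegral_congr fun ω' => ?_
  rw [Set.empty_union]
  -- Since `U \ ∅ = U`, the patched point agrees with `ω'` on `U`.
  exact eq_of_measurable_cyl (hKmeas U A hA) fun t ht => by simp [patch, ht]
end

section
/- Let (Ω, H, P, K) be an N-way counterfactual causal space, let U ⊆ T, and let Q be a probability measure on (Ω, H_U). Then the intervention causal mechanism satisfies the interventional determinism axiom: for every S ⊆ T, every ω ∈ Ω, every A ∈ H_S and every B ∈ H, K^{do(U,Q)}_S(ω, A ∩ B) = 1_A(ω)·K^{do(U,Q)}_S(ω, B); in particular, for A ∈ H_S, K^{do(U,Q)}_S(ω, A) = 1_A(ω). -/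
/-!
The point `patch Ωt U S ω ω'` has the same `S`-coordinates as `ω`, and membership in a set of
`cyl Ωt S` depends on the `S`-coordinates only (`mem_iff_of_cyl`). Hence for `A ∈ cyl Ωt S` the
factor `1_A` produced by interventional determinism of `K (S ∪ U)` at the patched point is the
constant `1_A(ω)`, and it comes out of the integral over `Q`.
-/

open MeasureTheory ENNReal

theorem cyl_mono {ι : Type*} (Ωt : ι → Type*) [∀ t, MeasurableSpace (Ωt t)] {S S' : Set ι}
    (h : S ⊆ S') : cyl Ωt S ≤ cyl Ωt S' :=
  biSup_mono h

theorem mem_iff_of_cyl {ι : Type*} (Ωt : ι → Type*) [∀ t, MeasurableSpace (Ωt t)] {S : Set ι}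
    {A : Set (∀ t, Ωt t)} (hA : MeasurableSet[cyl Ωt S] A) {ω ω' : ∀ t, Ωt t}
    (h : ∀ t ∈ S, ω t = ω' t) : ω ∈ A ↔ ω' ∈ A := by
  -- Every set of `cyl Ωt S` is a preimage under restriction to `S`; since measurability in the
  -- restricted space is irrelevant here, that space carries the σ-algebra `⊤`.
  have hle : cyl Ωt S ≤ MeasurableSpace.comap (S.domRestrict : (∀ t, Ωt t) → ∀ t : S, Ωt t) ⊤ := by
    refine iSup₂_le fun t ht => ?_
    rintro _ ⟨B, -, rfl⟩
    exact ⟨{x | x ⟨t, ht⟩ ∈ B}, trivial, rfl⟩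
  obtain ⟨B, -, rfl⟩ := hle A hA
  have : S.domRestrict ω = S.domRestrict ω' := funext fun t => h t t.2
  simp only [Set.mem_preimage, this]

theorem patch_apply_of_mem {ι : Type*} (Ωt : ι → Type*) (U : Set ι) {S : Set ι}
    (ω ω' : ∀ t, Ωt t) {t : ι} (ht : t ∈ S) : patch Ωt U S ω ω' t = ω t := by
  simp [patch, ht]

/-- The intervention causal mechanism satisfies the
interventional determinism axiom. -/
theorem interventionKernel_interventional_determinism
    {ι : Type*} {N : ℕ} (Ωt : ι → Type*) [∀ t, MeasurableSpace (Ωt t)]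
    -- the worlds: `T^j = world ⁻¹' {j}` partition the index set
    (world : ι → Fin N)
    -- the observational probability measure
    (P : Measure (∀ t, Ωt t)) (hP : IsProbabilityMeasure P)
    -- the causal mechanism: a family of probability kernels from `(Ω, H_S)` to `(Ω, H)`
    (K : Set ι → (∀ t, Ωt t) → Measure (∀ t, Ωt t))
    (hKprob : ∀ (S : Set ι) (ω : ∀ t, Ωt t), IsProbabilityMeasure (K S ω))
    (hKmeas : ∀ (S : Set ι) (A : Set (∀ t, Ωt t)), MeasurableSet A →
      Measurable[cyl Ωt S] fun ω => K S ω A)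
    -- axiom (i)
    (hK1 : ∀ (ω : ∀ t, Ωt t) (A : Set (∀ t, Ωt t)), MeasurableSet A → K ∅ ω A = P A)
    -- axiom (ii): no cross-world causal effect
    (hK2 : ∀ (j : Fin N) (S : Set ι) (ω : ∀ t, Ωt t) (A : Set (∀ t, Ωt t)),
      MeasurableSet[cyl Ωt (world ⁻¹' {j})] A → K S ω A = K (S ∩ world ⁻¹' {j}) ω A)
    -- axiom (iii): interventional determinism
    (hK3 : ∀ (S : Set ι) (ω : ∀ t, Ωt t) (A B : Set (∀ t, Ωt t)),
      MeasurableSet[cyl Ωt S] A → MeasurableSet B →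
      K S ω (A ∩ B) = A.indicator (fun _ => (1 : ℝ≥0∞)) ω * K S ω B)
    -- the intervention: a probability measure `Q` on `(Ω, H_U)`
    (U : Set ι) (Q : @Measure (∀ t, Ωt t) (cyl Ωt U)) (hQ : IsProbabilityMeasure Q) :
    -- conclusion: `K^{do(U,Q)}_S(ω, A ∩ B) = 1_A(ω) · K^{do(U,Q)}_S(ω, B)` for `A ∈ H_S`,
    -- and in particular `K^{do(U,Q)}_S(ω, A) = 1_A(ω)` for `A ∈ H_S`
    (∀ (S : Set ι) (ω : ∀ t, Ωt t) (A B : Set (∀ t, Ωt t)),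
      MeasurableSet[cyl Ωt S] A → MeasurableSet B →
      ∫⁻ ω', K (S ∪ U) (patch Ωt U S ω ω') (A ∩ B) ∂Q
        = A.indicator (fun _ => (1 : ℝ≥0∞)) ω * ∫⁻ ω', K (S ∪ U) (patch Ωt U S ω ω') B ∂Q)
    ∧ (∀ (S : Set ι) (ω : ∀ t, Ωt t) (A : Set (∀ t, Ωt t)),
      MeasurableSet[cyl Ωt S] A →
      ∫⁻ ω', K (S ∪ U) (patch Ωt U S ω ω') A ∂Q
        = A.indicator (fun _ => (1 : ℝ≥0∞)) ω) := by
  have key : ∀ (S : Set ι) (ω : ∀ t, Ωt t) (A B : Set (∀ t, Ωt t)),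
      MeasurableSet[cyl Ωt S] A → MeasurableSet B →
      ∫⁻ ω', K (S ∪ U) (patch Ωt U S ω ω') (A ∩ B) ∂Q
        = A.indicator (fun _ => (1 : ℝ≥0∞)) ω *
          ∫⁻ ω', K (S ∪ U) (patch Ωt U S ω ω') B ∂Q := by
    intro S ω A B hA hB
    have hmem : ∀ ω', patch Ωt U S ω ω' ∈ A ↔ ω ∈ A := fun ω' =>
      mem_iff_of_cyl Ωt hA fun t ht => patch_apply_of_mem Ωt U ω ω' ht
    have hdet : ∀ ω', K (S ∪ U) (patch Ωt U S ω ω') (A ∩ B) =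
        A.indicator (fun _ => (1 : ℝ≥0∞)) (patch Ωt U S ω ω') *
          K (S ∪ U) (patch Ωt U S ω ω') B := fun ω' =>
      hK3 _ _ _ _ (cyl_mono Ωt Set.subset_union_left A hA) hB
    simp only [hdet]
    -- The factor is `0` or `1`, so it leaves the integral without any measurability condition.
    by_cases h : ω ∈ A
    · simp [Set.indicator, hmem, h]
    · simp [Set.indicator, hmem, h]
  refine ⟨key, fun S ω A hA => ?_⟩
  simpa using key S ω A Set.univ hA MeasurableSet.univ
end

section
/- Let (Ω, H, P, K) be an N-way counterfactual causal space, let U ⊆ T, and let Q be a probability measure on (Ω, H_U). Then for every S ⊆ T the intervention kernel K^{do(U,Q)}_S is a probability kernel from (Ω, H_S) to (Ω, H): for every fixed A ∈ H the map ω ↦ K^{do(U,Q)}_S(ω, A) is H_S-measurable, and for every fixed ω ∈ Ω the set function A ↦ K^{do(U,Q)}_S(ω, A) is a probability measure on (Ω, H). -/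
/-!
Patching is a measurable operation `(Ω, H_S) × (Ω, H_U) → (Ω, H_{S ∪ U})`, because every coordinate
`t ∈ S ∪ U` of `patch ω ω'` is either the coordinate `ω' t` with `t ∈ U`, or the coordinate `ω t`
with `t ∈ S` (`measurable_patch`). Hence `(ω, ω') ↦ K_{S ∪ U}(patch ω ω', A)` is jointly measurable,
and Tonelli's theorem makes its integral over `ω'` an `H_S`-measurable function of `ω`. Since the
sections in `ω'` are `H_U`-measurable, countable additivity passes through the integral by
monotone convergence; the total mass is one because `Q` and all `K_{S ∪ U}(ω, ·)` are probabilities.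
-/

open MeasureTheory ENNReal

lemma measurable_coord_cyl {ι : Type*} (Ωt : ι → Type*) [∀ t, MeasurableSpace (Ωt t)]
    {S : Set ι} {t : ι} (ht : t ∈ S) :
    Measurable[cyl Ωt S] fun ω : ∀ t, Ωt t => ω t :=
  Measurable.of_comap_le (le_iSup₂_of_le t ht le_rfl)

lemma measurable_to_cyl {ι α : Type*} (Ωt : ι → Type*) [∀ t, MeasurableSpace (Ωt t)]
    [MeasurableSpace α] {S : Set ι} {f : α → ∀ t, Ωt t}
    (hf : ∀ t ∈ S, Measurable fun a => f a t) :
    Measurable[_, cyl Ωt S] f := by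
  rw [measurable_iff_comap_le, cyl]
  simp only [MeasurableSpace.comap_iSup, MeasurableSpace.comap_comp]
  exact iSup₂_le fun t ht => (hf t ht).comap_le

lemma measurable_patch {ι : Type*} (Ωt : ι → Type*) [∀ t, MeasurableSpace (Ωt t)] (U S : Set ι) :
    Measurable[(cyl Ωt S).prod (cyl Ωt U), cyl Ωt (S ∪ U)]
      fun p : (∀ t, Ωt t) × (∀ t, Ωt t) => patch Ωt U S p.1 p.2 := by
  letI : MeasurableSpace ((∀ t, Ωt t) × (∀ t, Ωt t)) := (cyl Ωt S).prod (cyl Ωt U)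
  refine measurable_to_cyl Ωt fun t ht => ?_
  by_cases h : t ∈ U \ S
  · simp only [patch, if_pos h]
    exact (measurable_coord_cyl Ωt h.1).comp (@measurable_snd _ _ (cyl Ωt S) (cyl Ωt U))
  · have hS : t ∈ S := by
      by_contra hS
      exact h ⟨ht.resolve_left hS, hS⟩
    simp only [patch, if_neg h]
    exact (measurable_coord_cyl Ωt hS).comp (@measurable_fst _ _ (cyl Ωt S) (cyl Ωt U))

/-- Each intervention kernel `K^{do(U,Q)}_S` is a probability
kernel from `(Ω, H_S)` to `(Ω, H)`: for fixed measurable `A` the map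
`ω ↦ K^{do(U,Q)}_S(ω, A)` is `H_S`-measurable, and for fixed `ω` the set function
`A ↦ K^{do(U,Q)}_S(ω, A)` is a probability measure on `(Ω, H)` (total mass one and
countably additive on measurable sets). -/
theorem interventionKernel_isProbabilityKernel
    {ι : Type*} {N : ℕ} (Ωt : ι → Type*) [∀ t, MeasurableSpace (Ωt t)]
    -- the worlds: `T^j = world ⁻¹' {j}` partition the index set
    (world : ι → Fin N)
    -- the observational probability measure
    (P : Measure (∀ t, Ωt t)) (hP : IsProbabilityMeasure P)
    -- the causal mechanism: a family of probability kernels from `(Ω, H_S)` to `(Ω, H)`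
    (K : Set ι → (∀ t, Ωt t) → Measure (∀ t, Ωt t))
    (hKprob : ∀ (S : Set ι) (ω : ∀ t, Ωt t), IsProbabilityMeasure (K S ω))
    (hKmeas : ∀ (S : Set ι) (A : Set (∀ t, Ωt t)), MeasurableSet A →
      Measurable[cyl Ωt S] fun ω => K S ω A)
    -- axiom (i)
    (hK1 : ∀ (ω : ∀ t, Ωt t) (A : Set (∀ t, Ωt t)), MeasurableSet A → K ∅ ω A = P A)
    -- axiom (ii): no cross-world causal effect
    (hK2 : ∀ (j : Fin N) (S : Set ι) (ω : ∀ t, Ωt t) (A : Set (∀ t, Ωt t)),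
      MeasurableSet[cyl Ωt (world ⁻¹' {j})] A → K S ω A = K (S ∩ world ⁻¹' {j}) ω A)
    -- axiom (iii): interventional determinism
    (hK3 : ∀ (S : Set ι) (ω : ∀ t, Ωt t) (A B : Set (∀ t, Ωt t)),
      MeasurableSet[cyl Ωt S] A → MeasurableSet B →
      K S ω (A ∩ B) = A.indicator (fun _ => (1 : ℝ≥0∞)) ω * K S ω B)
    -- the intervention: a probability measure `Q` on `(Ω, H_U)`
    (U : Set ι) (Q : @Measure (∀ t, Ωt t) (cyl Ωt U)) (hQ : IsProbabilityMeasure Q) :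
    ∀ S : Set ι,
      (∀ A : Set (∀ t, Ωt t), MeasurableSet A →
        Measurable[cyl Ωt S] fun ω => ∫⁻ ω', K (S ∪ U) (patch Ωt U S ω ω') A ∂Q)
      ∧ (∀ ω : ∀ t, Ωt t,
          (∫⁻ ω', K (S ∪ U) (patch Ωt U S ω ω') (Set.univ) ∂Q) = 1
          ∧ (∫⁻ ω', K (S ∪ U) (patch Ωt U S ω ω') (∅ : Set (∀ t, Ωt t)) ∂Q) = 0
          ∧ ∀ A : ℕ → Set (∀ t, Ωt t), (∀ n, MeasurableSet (A n)) →
              Pairwise (Function.onFun Disjoint A) →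
              ∫⁻ ω', K (S ∪ U) (patch Ωt U S ω ω') (⋃ n, A n) ∂Q
                = ∑' n, ∫⁻ ω', K (S ∪ U) (patch Ωt U S ω ω') (A n) ∂Q) := by
  intro S
  have joint : ∀ A : Set (∀ t, Ωt t), MeasurableSet A →
      Measurable[(cyl Ωt S).prod (cyl Ωt U)] fun p : (∀ t, Ωt t) × (∀ t, Ωt t) =>
        K (S ∪ U) (patch Ωt U S p.1 p.2) A := fun A hA =>
    (hKmeas (S ∪ U) A hA).comp (measurable_patch Ωt U S)
  refine ⟨fun A hA => ?_, fun ω => ⟨?_, ?_, fun A hA hd => ?_⟩⟩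
  · exact @Measurable.lintegral_prod_right' _ _ (cyl Ωt S) (cyl Ωt U) Q inferInstance _
      (joint A hA)
  · simp
  · simp
  · have section_meas : ∀ n, Measurable[cyl Ωt U] fun ω' =>
        K (S ∪ U) (patch Ωt U S ω ω') (A n) := fun n =>
      (joint (A n) (hA n)).comp (@measurable_prodMk_left _ _ (cyl Ωt S) (cyl Ωt U) ω)
    simp_rw [measure_iUnion hd hA]
    exact lintegral_tsum fun n => (section_meas n).aemeasurable
end

section
/- Let (Ω, H, P, K) be a counterfactual causal space, let U ⊆ T, let Q be a probability measure on (Ω, H_U), and let A, B ∈ H be events that are causally independent on H_U, i.e. K_U(ω, A ∩ B) = K_U(ω, A)·K_U(ω, B) for all ω ∈ Ω. Set μ := P^{do(U,Q)}. Then A and B are conditionally independent given H_U under μ: for μ-almost every ω ∈ Ω, μ[1_{A∩B} ∣ H_U](ω) = μ[1_A ∣ H_U](ω) · μ[1_B ∣ H_U](ω), where μ[· ∣ H_U] denotes conditional expectation with respect to the sub-σ-algebra H_U under μ and 1_A denotes the indicator function of A. -/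
/-!
By interventional determinism, `K_U(ω, s) = 1_s(ω)` for `s ∈ H_U`, so the intervention measure `μ`
restricts to `Q` on `H_U`. For an event `C`, determinism also gives
`μ (s ∩ C) = ∫_s K_U(·, C) dQ = ∫_s K_U(·, C) dμ` for every `s ∈ H_U`; hence the `H_U`-measurable
function `K_U(·, C)` is a version of `μ[1_C | H_U]` (`condExp_indicator_ae_eq_of_deterministic`).
Applying this to `A`, `B` and `A ∩ B` turns the pointwise factorisation of `K_U` into the
almost sure factorisation of the conditional expectations.
-/

open MeasureTheory ENNReal

lemma cyl_le_pi {ι : Type*} (Ωt : ι → Type*) [∀ t, MeasurableSpace (Ωt t)] (S : Set ι) :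
    cyl Ωt S ≤ MeasurableSpace.pi :=
  iSup₂_le fun t _ => (measurable_pi_apply t).comap_le

/-- If `μ` is the mixture over `Q` of an `m`-measurable probability kernel `κ` that is
deterministic on `m`, then `κ(·, C)` is a version of the conditional probability of `C`
given `m` under `μ`. -/
lemma condExp_indicator_ae_eq_of_deterministic {Ω : Type*} {m m₀ : MeasurableSpace Ω} (hm : m ≤ m₀)
    (κ : Ω → @Measure Ω m₀) (hκ : ∀ ω, IsProbabilityMeasure (κ ω))
    (hmeas : ∀ C, MeasurableSet[m₀] C → Measurable[m] fun ω => κ ω C)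
    (hdet : ∀ ω s C, MeasurableSet[m] s → MeasurableSet[m₀] C →
      κ ω (s ∩ C) = s.indicator (fun _ => (1 : ℝ≥0∞)) ω * κ ω C)
    (Q : @Measure Ω m) (μ : @Measure Ω m₀) (hμprob : IsProbabilityMeasure μ)
    (hμ : ∀ C, MeasurableSet[m₀] C → μ C = ∫⁻ ω, κ ω C ∂Q)
    {C : Set Ω} (hC : MeasurableSet[m₀] C) :
    (fun ω => (κ ω C).toReal) =ᵐ[μ] μ[C.indicator (fun _ => (1 : ℝ)) | m] := by
  have hmix : ∀ s D, MeasurableSet[m] s → MeasurableSet[m₀] D →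
      μ (s ∩ D) = ∫⁻ ω in s, κ ω D ∂Q := by
    intro s D hs hD
    rw [hμ _ ((hm s hs).inter hD), ← lintegral_indicator hs]
    refine lintegral_congr fun ω => ?_
    rw [hdet ω s D hs hD]
    by_cases h : ω ∈ s <;> simp [h]
  have htrim : μ.trim hm = Q := by
    refine @Measure.ext _ m _ _ fun s hs => ?_
    rw [trim_measurableSet_eq hm hs]
    simpa using hmix s Set.univ hs MeasurableSet.univ
  have hset : ∀ s, MeasurableSet[m] s → ∫⁻ ω in s, κ ω C ∂μ = μ (s ∩ C) := by
    intro s hs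
    rw [hmix s C hs hC, ← htrim, setLIntegral_trim hm (hmeas C hC) hs]
  have hreal : Measurable[m] fun ω => (κ ω C).toReal := (hmeas C hC).ennreal_toReal
  have hint : Integrable (fun ω => (κ ω C).toReal) μ := by
    refine Integrable.of_bound (hreal.mono hm le_rfl).aestronglyMeasurable 1 (.of_forall fun ω => ?_)
    rw [Real.norm_of_nonneg ENNReal.toReal_nonneg]
    exact measureReal_le_one
  refine ae_eq_condExp_of_forall_setIntegral_eq hm ((integrable_const _).indicator hC)
    (fun s _ _ => hint.integrableOn) (fun s hs _ => ?_) hreal.stronglyMeasurable.aestronglyMeasurable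
  rw [integral_toReal ((hmeas C hC).mono hm le_rfl).aemeasurable
    (.of_forall fun ω => measure_lt_top _ _), hset s hs, setIntegral_indicator hC]
  simp [measureReal_def]

/-- If `A` and `B` are causally independent on `H_U`, then after an
intervention on `H_U` via `Q` they are conditionally independent given `H_U` under the
intervention measure `μ = P^{do(U,Q)}`. -/
theorem causally_independent_condIndep_after_intervention
    {ι : Type*} (Ωt : ι → Type*) [∀ t, MeasurableSpace (Ωt t)]
    -- the factual index set `T^F = F`; the counterfactual index set is `T^CF = Fᶜ`
    (F : Set ι)
    -- the observational probability measure
    (P : Measure (∀ t, Ωt t)) (hP : IsProbabilityMeasure P)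
    -- the causal mechanism: a family of probability kernels from `(Ω, H_S)` to `(Ω, H)`
    (K : Set ι → (∀ t, Ωt t) → Measure (∀ t, Ωt t))
    (hKprob : ∀ (S : Set ι) (ω : ∀ t, Ωt t), IsProbabilityMeasure (K S ω))
    (hKmeas : ∀ (S : Set ι) (A : Set (∀ t, Ωt t)), MeasurableSet A →
      Measurable[cyl Ωt S] fun ω => K S ω A)
    -- axiom (i)
    (hK1 : ∀ (ω : ∀ t, Ωt t) (A : Set (∀ t, Ωt t)), MeasurableSet A → K ∅ ω A = P A)
    -- axiom (ii): no cross-world causal effect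
    (hK2F : ∀ (S : Set ι) (ω : ∀ t, Ωt t) (A : Set (∀ t, Ωt t)),
      MeasurableSet[cyl Ωt F] A → K S ω A = K (S ∩ F) ω A)
    (hK2CF : ∀ (S : Set ι) (ω : ∀ t, Ωt t) (B : Set (∀ t, Ωt t)),
      MeasurableSet[cyl Ωt Fᶜ] B → K S ω B = K (S ∩ Fᶜ) ω B)
    -- axiom (iii): interventional determinism
    (hK3 : ∀ (S : Set ι) (ω : ∀ t, Ωt t) (A B : Set (∀ t, Ωt t)),
      MeasurableSet[cyl Ωt S] A → MeasurableSet B →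
      K S ω (A ∩ B) = A.indicator (fun _ => (1 : ℝ≥0∞)) ω * K S ω B)
    -- the intervention: a probability measure `Q` on `(Ω, H_U)`
    (U : Set ι) (Q : @Measure (∀ t, Ωt t) (cyl Ωt U)) (hQ : IsProbabilityMeasure Q)
    -- the events `A, B ∈ H`, causally independent on `H_U`
    (A B : Set (∀ t, Ωt t)) (hA : MeasurableSet A) (hB : MeasurableSet B)
    (hCI : ∀ ω : ∀ t, Ωt t, K U ω (A ∩ B) = K U ω A * K U ω B)
    -- `μ := P^{do(U,Q)}` is the intervention measure
    (μ : Measure (∀ t, Ωt t)) (hμprob : IsProbabilityMeasure μ)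
    (hμ : ∀ C : Set (∀ t, Ωt t), MeasurableSet C → μ C = ∫⁻ ω, K U ω C ∂Q) :
    -- conclusion: `A` and `B` are conditionally independent given `H_U` under `μ`
    ∀ᵐ ω ∂μ,
      (μ[(A ∩ B).indicator (fun _ => (1 : ℝ)) | cyl Ωt U]) ω
        = (μ[A.indicator (fun _ => (1 : ℝ)) | cyl Ωt U]) ω
          * (μ[B.indicator (fun _ => (1 : ℝ)) | cyl Ωt U]) ω := by
  have key := fun (C : Set (∀ t, Ωt t)) (hC : MeasurableSet C) =>
    condExp_indicator_ae_eq_of_deterministic (cyl_le_pi Ωt U) (K U) (hKprob U) (hKmeas U)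
      (fun ω s D => hK3 U ω s D) Q μ hμprob hμ hC
  filter_upwards [key A hA, key B hB, key (A ∩ B) (hA.inter hB)] with ω h1 h2 h3
  rw [← h1, ← h2, ← h3, hCI ω, ENNReal.toReal_mul]
end

section
/- Let (Ω, H, P, K) be a counterfactual causal space, let U ⊆ T, and let Q be a probability measure on (Ω, H_U). Suppose that H_{U∩T^F} and H_{U∩T^CF} are independent under Q, i.e. Q(A ∩ B) = Q(A)·Q(B) for all A ∈ H_{U∩T^F} and B ∈ H_{U∩T^CF}, and that H^F and H^CF are causally independent on H_U, i.e. K_U(ω, A ∩ B) = K_U(ω, A)·K_U(ω, B) for all A ∈ H^F, all B ∈ H^CF and all ω ∈ Ω. Then H^F and H^CF are independent under P^{do(U,Q)}: for all A ∈ H^F and B ∈ H^CF, P^{do(U,Q)}(A ∩ B) = P^{do(U,Q)}(A)·P^{do(U,Q)}(B). -/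
/-!
By causal independence the integrand `K U ω (A ∩ B)` factors as `K U ω A * K U ω B`.  Since there
is no cross-world effect, the first factor equals `K (U ∩ F) ω A` and the second
`K (U ∩ Fᶜ) ω B`, so they are measurable with respect to `H_{U∩T^F}` and `H_{U∩T^CF}`.  These
σ-algebras are independent under `Q`, hence the integral of the product is the product of the
integrals.
-/

open MeasureTheory ENNReal

/-- If `H_{U∩T^F}` and `H_{U∩T^CF}` are independent under `Q`, and the
factual and counterfactual worlds `H^F`, `H^CF` are causally independent on `H_U`, then
`H^F` and `H^CF` are independent under the intervention measure `P^{do(U,Q)}`. -/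
theorem worlds_independent_after_intervention
    {ι : Type*} (Ωt : ι → Type*) [∀ t, MeasurableSpace (Ωt t)]
    -- the factual index set `T^F = F`; the counterfactual index set is `T^CF = Fᶜ`
    (F : Set ι)
    -- the observational probability measure
    (P : Measure (∀ t, Ωt t)) (hP : IsProbabilityMeasure P)
    -- the causal mechanism: a family of probability kernels from `(Ω, H_S)` to `(Ω, H)`
    (K : Set ι → (∀ t, Ωt t) → Measure (∀ t, Ωt t))
    (hKprob : ∀ (S : Set ι) (ω : ∀ t, Ωt t), IsProbabilityMeasure (K S ω))
    (hKmeas : ∀ (S : Set ι) (A : Set (∀ t, Ωt t)), MeasurableSet A →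
      Measurable[cyl Ωt S] fun ω => K S ω A)
    -- axiom (i)
    (hK1 : ∀ (ω : ∀ t, Ωt t) (A : Set (∀ t, Ωt t)), MeasurableSet A → K ∅ ω A = P A)
    -- axiom (ii): no cross-world causal effect
    (hK2F : ∀ (S : Set ι) (ω : ∀ t, Ωt t) (A : Set (∀ t, Ωt t)),
      MeasurableSet[cyl Ωt F] A → K S ω A = K (S ∩ F) ω A)
    (hK2CF : ∀ (S : Set ι) (ω : ∀ t, Ωt t) (B : Set (∀ t, Ωt t)),
      MeasurableSet[cyl Ωt Fᶜ] B → K S ω B = K (S ∩ Fᶜ) ω B)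
    -- axiom (iii): interventional determinism
    (hK3 : ∀ (S : Set ι) (ω : ∀ t, Ωt t) (A B : Set (∀ t, Ωt t)),
      MeasurableSet[cyl Ωt S] A → MeasurableSet B →
      K S ω (A ∩ B) = A.indicator (fun _ => (1 : ℝ≥0∞)) ω * K S ω B)
    -- the intervention: a probability measure `Q` on `(Ω, H_U)`
    (U : Set ι) (Q : @Measure (∀ t, Ωt t) (cyl Ωt U)) (hQ : IsProbabilityMeasure Q)
    -- `H_{U∩T^F}` and `H_{U∩T^CF}` are independent under `Q`
    (hQindep : ∀ (A B : Set (∀ t, Ωt t)),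
      MeasurableSet[cyl Ωt (U ∩ F)] A → MeasurableSet[cyl Ωt (U ∩ Fᶜ)] B →
      Q (A ∩ B) = Q A * Q B)
    -- `H^F` and `H^CF` are causally independent on `H_U`
    (hCI : ∀ (A B : Set (∀ t, Ωt t)),
      MeasurableSet[cyl Ωt F] A → MeasurableSet[cyl Ωt Fᶜ] B →
      ∀ ω : ∀ t, Ωt t, K U ω (A ∩ B) = K U ω A * K U ω B) :
    -- conclusion: `H^F` and `H^CF` are independent under `P^{do(U,Q)}`
    ∀ (A B : Set (∀ t, Ωt t)),
      MeasurableSet[cyl Ωt F] A → MeasurableSet[cyl Ωt Fᶜ] B →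
      ∫⁻ ω, K U ω (A ∩ B) ∂Q = (∫⁻ ω, K U ω A ∂Q) * ∫⁻ ω, K U ω B ∂Q := by
  intro A B hA hB
  have cyl_mono : ∀ {S S' : Set ι}, S ⊆ S' → cyl Ωt S ≤ cyl Ωt S' :=
    fun h => biSup_mono h
  have cyl_le : ∀ S : Set ι, cyl Ωt S ≤ MeasurableSpace.pi :=
    fun S => iSup₂_le fun t _ => (measurable_pi_apply t).comap_le
  have hmA : Measurable[cyl Ωt (U ∩ F)] fun ω => K U ω A := by
    simp_rw [hK2F U _ A hA]
    exact hKmeas _ A (cyl_le F A hA)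
  have hmB : Measurable[cyl Ωt (U ∩ Fᶜ)] fun ω => K U ω B := by
    simp_rw [hK2CF U _ B hB]
    exact hKmeas _ B (cyl_le Fᶜ B hB)
  simp_rw [hCI A B hA hB]
  exact ProbabilityTheory.lintegral_mul_eq_lintegral_mul_lintegral_of_independent_measurableSpace
    (cyl_mono Set.inter_subset_left) (cyl_mono Set.inter_subset_left)
    ((ProbabilityTheory.Indep_iff _ _ Q).2 hQindep) hmA hmB
end

section
/- Let (Ω, H, P, K) be a causal space, let U ⊆ T, and let Q be a probability measure on (Ω, H_U). Then H_U is a global source of the intervened causal space; that is, the map ω ↦ K_U(ω, A) is a version of the conditional probability of A given H_U under P^{do(U,Q)}: for every A ∈ H and every B ∈ H_U, P^{do(U,Q)}(A ∩ B) = ∫ 1_B(ω)·K_U(ω, A) P^{do(U,Q)}(dω). -/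
/-! By interventional determinism `K_U(ω, C) = 1_C(ω)` for `C ∈ H_U`, so `P^{do(U,Q)}` restricts
to `Q` on `H_U`. The integrand `1_B · K_U(·, A)` is `H_U`-measurable, hence its integral against
`P^{do(U,Q)}` equals its integral against `Q`; by determinism again, the latter is
`∫ K_U(ω, A ∩ B) Q(dω) = P^{do(U,Q)}(A ∩ B)`. -/

open MeasureTheory ENNReal

/-- After an intervention on `H_U` via `Q`, the σ-algebra `H_U` is a
global source of the intervened causal space: `ω ↦ K_U(ω, A)` is a version of the
conditional probability of `A` given `H_U` under `μ = P^{do(U,Q)}`, i.e.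
`P^{do(U,Q)}(A ∩ B) = ∫ 1_B(ω) · K_U(ω, A) P^{do(U,Q)}(dω)` for all `A ∈ H`, `B ∈ H_U`. -/
theorem intervened_sigmaAlgebra_is_global_source
    {ι : Type*} (Ωt : ι → Type*) [∀ t, MeasurableSpace (Ωt t)]
    -- the observational probability measure
    (P : Measure (∀ t, Ωt t)) (hP : IsProbabilityMeasure P)
    -- the causal mechanism: a family of probability kernels from `(Ω, H_S)` to `(Ω, H)`
    (K : Set ι → (∀ t, Ωt t) → Measure (∀ t, Ωt t))
    (hKprob : ∀ (S : Set ι) (ω : ∀ t, Ωt t), IsProbabilityMeasure (K S ω))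
    (hKmeas : ∀ (S : Set ι) (A : Set (∀ t, Ωt t)), MeasurableSet A →
      Measurable[cyl Ωt S] fun ω => K S ω A)
    -- axiom (i)
    (hK1 : ∀ (ω : ∀ t, Ωt t) (A : Set (∀ t, Ωt t)), MeasurableSet A → K ∅ ω A = P A)
    -- axiom (ii): interventional determinism
    (hK2 : ∀ (S : Set ι) (ω : ∀ t, Ωt t) (A B : Set (∀ t, Ωt t)),
      MeasurableSet[cyl Ωt S] A → MeasurableSet B →
      K S ω (A ∩ B) = A.indicator (fun _ => (1 : ℝ≥0∞)) ω * K S ω B)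
    -- the intervention: a probability measure `Q` on `(Ω, H_U)`
    (U : Set ι) (Q : @Measure (∀ t, Ωt t) (cyl Ωt U)) (hQ : IsProbabilityMeasure Q)
    -- `μ := P^{do(U,Q)}` is the intervention measure
    (μ : Measure (∀ t, Ωt t))
    (hμ : ∀ C : Set (∀ t, Ωt t), MeasurableSet C → μ C = ∫⁻ ω, K U ω C ∂Q) :
    ∀ (A B : Set (∀ t, Ωt t)), MeasurableSet A → MeasurableSet[cyl Ωt U] B →
      μ (A ∩ B) = ∫⁻ ω, B.indicator (fun _ => (1 : ℝ≥0∞)) ω * K U ω A ∂μ := by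
  intro A B hA hB
  have hle : cyl Ωt U ≤ MeasurableSpace.pi :=
    iSup₂_le fun t _ => (measurable_pi_apply t).comap_le
  have htrim : μ.trim hle = Q := by
    refine @Measure.ext _ (cyl Ωt U) _ _ fun C hC => ?_
    rw [trim_measurableSet_eq hle hC, hμ C (hle C hC)]
    have hKC : ∀ ω, K U ω C = C.indicator (fun _ => (1 : ℝ≥0∞)) ω := fun ω => by
      have := hKprob U ω
      simpa using hK2 U ω C Set.univ hC MeasurableSet.univ
    simp only [hKC]
    exact @lintegral_indicator_one _ (cyl Ωt U) Q C hC
  have hmeas : Measurable[cyl Ωt U]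
      fun ω => B.indicator (fun _ => (1 : ℝ≥0∞)) ω * K U ω A :=
    (measurable_const.indicator hB).mul (hKmeas U A hA)
  rw [← lintegral_trim hle hmeas, htrim, hμ _ (hA.inter (hle B hB))]
  simp only [Set.inter_comm A B, hK2 U _ B A hB hA]
end
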